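/- Let n ≥ 1, let f ∈ Q₀ⁿ, and suppose there exists a ∈ [e^{−n}, 1] such that a·‖f‖_∞·1_{B₂ⁿ} ≤ f pointwise (which holds when f is in John's position). Then for every integer k with 0 ≤ k ≤ n−1, W_{n−k}(f) ≤ W_{n−k−1}(f) · (n+k+1)/(k+1). -/

import Mathlib

open MeasureTheory

noncomputable section

/-- `ℝⁿ` with its Euclidean structure. -/
abbrev Eucl (n : ℕ) := EuclideanSpace ℝ (Fin n)

/-- `f : ℝⁿ → [0,∞)` is log-concave:
`f(tx+(1−t)y) ≥ f(x)^t · f(y)^(1−t)` for all `x, y` and `t ∈ (0,1)`. -/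
def IsLogConcave {n : ℕ} (f : Eucl n → ℝ) : Prop :=
  ∀ x y : Eucl n, ∀ t : ℝ, 0 < t → t < 1 →
    f x ^ t * f y ^ (1 - t) ≤ f (t • x + (1 - t) • y)

/-- The class `Q₀ⁿ`: nonnegative, log-concave, upper semicontinuous, integrable
functions with positive integral. -/
def MemQ0 {n : ℕ} (f : Eucl n → ℝ) : Prop :=
  (∀ x, 0 ≤ f x) ∧ IsLogConcave f ∧ UpperSemicontinuous f ∧
    Integrable f ∧ 0 < ∫ x, f x

/-- `‖f‖_∞ = sup f`. -/
def supNorm {n : ℕ} (f : Eucl n → ℝ) : ℝ := ⨆ x, f x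

/-- `‖f‖_p = (∫ f^p)^(1/p)`. -/
def lpNorm {n : ℕ} (p : ℝ) (f : Eucl n → ℝ) : ℝ := (∫ x, f x ^ p) ^ (1 / p)

/-- `‖P_H f‖_{L¹(H)} = ∫_H sup_{z ∈ H⊥} f(y+z) dλ_H(y)`, the `L¹(H)`-norm of the
projection of `f` onto the subspace `H` (with the Lebesgue measure on `H` induced
by the Euclidean structure). -/
def projL1 {n : ℕ} (f : Eucl n → ℝ) (H : Submodule ℝ (Eucl n)) : ℝ :=
  ∫ y : H, ⨆ z : Hᗮ, f ((y : Eucl n) + (z : Eucl n))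

/-- `‖S_H f‖_{L¹(H)} = ∫_H f dλ_H`, the integral of the section `f|_H`. -/
def sectL1 {n : ℕ} (f : Eucl n → ℝ) (H : Submodule ℝ (Eucl n)) : ℝ :=
  ∫ y : H, f (y : Eucl n)

/-- The orthogonal group `O(n)` acting on `ℝⁿ`. -/
abbrev OG (n : ℕ) := Matrix.orthogonalGroup (Fin n) ℝ

instance (n : ℕ) : MeasurableSpace (OG n) := borel _

/-- The volume `ω_d` of the Euclidean unit ball in `ℝ^d`. -/
def ballVol (d : ℕ) : ℝ := (volume (Metric.closedBall (0 : Eucl d) 1)).toReal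

/-- The coordinate subspace `H₀ᵏ = span(e₁, …, e_k)` of `ℝⁿ`. -/
def stdSubspace (n k : ℕ) : Submodule ℝ (Eucl n) :=
  Submodule.span ℝ {v | ∃ i : Fin n, (i : ℕ) < k ∧ v = EuclideanSpace.single i 1}

/-- The quermassintegral `W_j(f)` of a function `f : ℝⁿ → [0,∞)`, defined for
`0 ≤ j ≤ n-1` (writing `k = n - j`) by
`W_{n−k}(f) = (ω_n/ω_k) ∫_{O(n)} ∫_{H₀ᵏ} sup_{z ∈ (H₀ᵏ)⊥} f(g(y+z)) dλ_k(y) dν(g)`,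
where `ν` is the Haar probability measure on `O(n)`, together with the convention
`W_n(f) = ω_n · ‖f‖_∞`.  (For `j = 0` the formula gives `W_0(f) = ‖f‖₁`.) -/
def querm {n : ℕ} (ν : Measure (OG n)) (f : Eucl n → ℝ) (j : ℕ) : ℝ :=
  if j = n then ballVol n * supNorm f
  else (ballVol n / ballVol (n - j)) *
    ∫ g : OG n,
      (∫ y : stdSubspace n (n - j), ⨆ z : (stdSubspace n (n - j))ᗮ,
        f ((Matrix.toEuclideanLin (g : Matrix (Fin n) (Fin n) ℝ))
            ((y : Eucl n) + (z : Eucl n)))) ∂ν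

/-!
Log-concavity turns the lower bound `exp (-c) * sup f ≤ f` on the unit ball into a dilation bound:
`f z ≤ exp (c ε) * f (x / (1 + ε))` whenever `‖x - z‖ ≤ ε`. All projections `P_H f` inherit it.

Let `G` be such a function on a space of dimension `d = k + 1`. Replacing `G` by its supremum over
translates by a segment `[-ε u, ε u]` increases `∫ G` by at least `2 ε ‖u‖ ‖P_{u⊥} G‖₁`. If the
zonotope `∑ [-u i, u i]` lies in the ball of radius `ρ`, the dilation bound limits the total
increase, and to first order in `ε` this gives
`∑ 2 ‖u i‖ ‖P_{(u i)⊥} G‖₁ ≤ (c + d) ρ ∫ G`.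
Discretizing the field `x ↦ x` on the unit ball makes the zonotope nearly round, with
`ρ → ∫_B |⟪x, θ⟫| dx = 2 ω_k / (k + 2)` and `∑ ‖u i‖ → ∫_B ‖x‖ dx = (k + 1) ω_{k+1} / (k + 2)`.
For `G = P_{gH} f`, averaging over `g` makes the left-hand integrals independent of `u i`.
-/

section

open Metric Module Filter Topology
open scoped ENNReal NNReal Pointwise RealInnerProductSpace

/-! ### Suprema over translates -/

lemma aemeasurable_of_quasiconcaveOn_univ {V : Type*} [NormedAddCommGroup V] [NormedSpace ℝ V]
    [FiniteDimensional ℝ V] [MeasurableSpace V] [BorelSpace V] {G : V → ℝ≥0∞}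
    (hG : QuasiconcaveOn ℝ Set.univ G) (μ : Measure V) [μ.IsAddHaarMeasure] : AEMeasurable G μ := by
  have hnull : NullMeasurable G μ :=
    @measurable_of_Ioi ℝ≥0∞ (NullMeasurableSpace V μ) _ _ _ _ _ _ _ _ fun t => by
      have h := (hG.convex_gt t).nullMeasurableSet μ
      simp only [Set.mem_univ, true_and] at h
      exact h
  exact hnull.aemeasurable

lemma quasiconcaveOn_univ_comp_linearMap {V W : Type*} [AddCommGroup V] [Module ℝ V]
    [AddCommGroup W] [Module ℝ W] {G : W → ℝ≥0∞} (hG : QuasiconcaveOn ℝ Set.univ G)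
    (L : V →ₗ[ℝ] W) : QuasiconcaveOn ℝ Set.univ (G ∘ L) := fun r => by
  simpa using (hG r).linear_preimage L

/-- The sup-convolution of `G` with the indicator of `-K`: the level sets of `G` are enlarged by
Minkowski addition of `-K`. For a subspace `K = Hᗮ` this is the projection of `G` along `Hᗮ`. -/
def supTranslate {V : Type*} [Add V] (K : Set V) (G : V → ℝ≥0∞) (x : V) : ℝ≥0∞ :=
  ⨆ p ∈ K, G (x + p)

section SupTranslate

variable {V : Type*} [AddCommGroup V] {K L : Set V} {G : V → ℝ≥0∞}

lemma le_supTranslate {p : V} (hp : p ∈ K) (x : V) : G (x + p) ≤ supTranslate K G x :=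
  le_iSup₂_of_le p hp le_rfl

lemma supTranslate_mono (h : K ⊆ L) (x : V) : supTranslate K G x ≤ supTranslate L G x :=
  biSup_mono h

@[simp]
lemma supTranslate_singleton_zero : supTranslate {0} G = G := by
  ext x
  simp [supTranslate]

lemma supTranslate_add : supTranslate (K + L) G = supTranslate K (supTranslate L G) := by
  ext x
  simp only [supTranslate, ← Set.image2_add, iSup_image2, add_assoc]

lemma quasiconcaveOn_univ_supTranslate [Module ℝ V] (hK : Convex ℝ K)
    (hG : QuasiconcaveOn ℝ Set.univ G) : QuasiconcaveOn ℝ Set.univ (supTranslate K G) := by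
  rw [quasiconcaveOn_iff_min_le] at hG ⊢
  refine ⟨convex_univ, fun x _ y _ a b ha hb hab => le_of_forall_lt fun t ht => ?_⟩
  simp only [lt_min_iff, supTranslate, lt_iSup_iff] at ht ⊢
  obtain ⟨⟨p, hp, hxp⟩, q, hq, hyq⟩ := ht
  refine ⟨a • p + b • q, hK hp hq ha hb hab, (lt_min hxp hyq).trans_le ?_⟩
  convert hG.2 (Set.mem_univ (x + p)) (Set.mem_univ (y + q)) ha hb hab using 2
  module

lemma setLIntegral_le_setLIntegral_supTranslate [MeasurableSpace V] [MeasurableAdd V]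
    (μ : Measure V) [μ.IsAddRightInvariant] {p : V} (hp : p ∈ K) (S : Set V) :
    ∫⁻ x in S, G x ∂μ ≤ ∫⁻ x in (· + p) ⁻¹' S, supTranslate K G x ∂μ := by
  rw [← (measurePreserving_add_right μ p).setLIntegral_comp_preimage_emb
    (measurableEmbedding_addRight p)]
  exact lintegral_mono fun x => le_supTranslate hp x

end SupTranslate

lemma lintegral_add_le_lintegral_supTranslate_Icc (φ : ℝ → ℝ≥0∞) {δ : ℝ} (hδ : 0 ≤ δ) (t₀ : ℝ) :
    (∫⁻ t, φ t) + ENNReal.ofReal (2 * δ) * φ t₀ ≤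
      ∫⁻ t, supTranslate (Set.Icc (-δ) δ) φ t := by
  set ψ := supTranslate (Set.Icc (-δ) δ) φ
  have hleft : ∫⁻ t in Set.Iio t₀, φ t ≤ ∫⁻ t in Set.Iio (t₀ - δ), ψ t := by
    simpa using setLIntegral_le_setLIntegral_supTranslate volume (K := Set.Icc (-δ) δ) (G := φ)
      (Set.right_mem_Icc.2 (by linarith)) (Set.Iio t₀)
  have hright : ∫⁻ t in Set.Ici t₀, φ t ≤ ∫⁻ t in Set.Ici (t₀ + δ), ψ t := by
    simpa using setLIntegral_le_setLIntegral_supTranslate volume (K := Set.Icc (-δ) δ) (G := φ)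
      (Set.left_mem_Icc.2 (by linarith)) (Set.Ici t₀)
  have hmid : ENNReal.ofReal (2 * δ) * φ t₀ ≤ ∫⁻ t in Set.Ico (t₀ - δ) (t₀ + δ), ψ t :=
    calc ENNReal.ofReal (2 * δ) * φ t₀ = ∫⁻ _ in Set.Ico (t₀ - δ) (t₀ + δ), φ t₀ := by
          rw [setLIntegral_const, Real.volume_Ico, mul_comm]
          ring_nf
      _ ≤ ∫⁻ t in Set.Ico (t₀ - δ) (t₀ + δ), ψ t :=
          setLIntegral_mono' measurableSet_Ico fun t ht => by
            have hmem : t₀ - t ∈ Set.Icc (-δ) δ := ⟨by linarith [ht.2], by linarith [ht.1]⟩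
            simpa using le_supTranslate (G := φ) hmem t
  calc (∫⁻ t, φ t) + ENNReal.ofReal (2 * δ) * φ t₀
      = (∫⁻ t in Set.Iio t₀, φ t) + (∫⁻ t in Set.Ici t₀, φ t) + ENNReal.ofReal (2 * δ) * φ t₀ := by
        rw [← lintegral_add_compl φ (measurableSet_Iio (a := t₀)), Set.compl_Iio]
    _ ≤ (∫⁻ t in Set.Iio (t₀ - δ), ψ t) + (∫⁻ t in Set.Ici (t₀ + δ), ψ t)
        + ∫⁻ t in Set.Ico (t₀ - δ) (t₀ + δ), ψ t := by gcongr
    _ = ∫⁻ t, ψ t := by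
        rw [add_assoc, add_comm (∫⁻ t in Set.Ici (t₀ + δ), ψ t),
          ← lintegral_union measurableSet_Ici
            ((Set.Iio_disjoint_Ici le_rfl).mono_left Set.Ico_subset_Iio_self),
          Set.Ico_union_Ici_eq_Ici (by linarith), ← Set.compl_Iio,
          lintegral_add_compl ψ measurableSet_Iio]

section EuclideanSpaces

variable {E : Type*} [NormedAddCommGroup E] [InnerProductSpace ℝ E] [FiniteDimensional ℝ E]
  [MeasurableSpace E] [BorelSpace E]

/-! ### Projections and zonotopes -/

lemma lintegral_eq_lintegral_lintegral_orthogonal (S : Submodule ℝ E) {G : E → ℝ≥0∞}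
    (hG : AEMeasurable G volume) :
    ∫⁻ x, G x = ∫⁻ y : S, ∫⁻ z : Sᗮ, G (y + z) := by
  have hmp : MeasurePreserving (S.measurableEquivProd (0 : E)).symm volume volume := by
    simpa only [InnerProductSpace.euclideanHausdorffMeasure_eq_volume] using
      (S.measurePreserving_measurableEquivProd (0 : E)).symm
  rw [← hmp.map_eq, lintegral_map_equiv, Measure.volume_eq_prod, lintegral_prod]
  · simp
  · rw [← Measure.volume_eq_prod]
    exact hG.comp_quasiMeasurePreserving hmp.quasiMeasurePreserving

lemma lintegral_eq_lintegral_orthogonal_span_singleton {u : E} (hu : u ≠ 0) {G : E → ℝ≥0∞}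
    (hG : AEMeasurable G volume) :
    ∫⁻ x, G x = ∫⁻ y : (ℝ ∙ u)ᗮ, ‖u‖ₑ * ∫⁻ t : ℝ, G (y + t • u) := by
  set v : ℝ ∙ u := ⟨u, Submodule.mem_span_singleton_self u⟩
  have hv : v ≠ 0 := by simpa [v] using hu
  have hemb : MeasurableEmbedding fun t : ℝ => t • v :=
    (isClosedEmbedding_smul_left hv).measurableEmbedding
  rw [lintegral_eq_lintegral_lintegral_orthogonal (ℝ ∙ u)ᗮ hG, Submodule.orthogonal_orthogonal,
    volume_eq_of_finrank_eq_one (finrank_span_singleton hu) hv]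
  simp only [lintegral_smul_measure, hemb.lintegral_map]
  rfl

/-- The projection `P_H F(y) = sup_{z ∈ H⊥} F(y + z)` of a function onto the subspace `H`. -/
def projFun {V : Type*} [NormedAddCommGroup V] [InnerProductSpace ℝ V] (F : V → ℝ≥0∞)
    (H : Submodule ℝ V) (y : H) : ℝ≥0∞ :=
  supTranslate (Hᗮ : Set V) F y

/-- The integral `‖P_H F‖_{L¹(H)}` of the projection of `F` onto `H`. -/
def projMass (F : E → ℝ≥0∞) (H : Submodule ℝ E) : ℝ≥0∞ :=
  ∫⁻ y : H, projFun F H y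

lemma projMass_mono {F G : E → ℝ≥0∞} (h : F ≤ G) (H : Submodule ℝ E) :
    projMass F H ≤ projMass G H :=
  lintegral_mono fun _ => iSup₂_mono fun _ _ => h _

lemma quasiconcaveOn_univ_projFun {V : Type*} [NormedAddCommGroup V] [InnerProductSpace ℝ V]
    {F : V → ℝ≥0∞} (hF : QuasiconcaveOn ℝ Set.univ F) (H : Submodule ℝ V) :
    QuasiconcaveOn ℝ Set.univ (projFun F H) :=
  quasiconcaveOn_univ_comp_linearMap (quasiconcaveOn_univ_supTranslate Hᗮ.convex hF) H.subtype

lemma projFun_orthogonal_span_singleton {V : Type*} [NormedAddCommGroup V] [InnerProductSpace ℝ V]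
    (F : V → ℝ≥0∞) (u : V) (y : (ℝ ∙ u)ᗮ) :
    projFun F (ℝ ∙ u)ᗮ y = ⨆ t : ℝ, F (y + t • u) := by
  simp_rw [projFun, supTranslate, Submodule.orthogonal_orthogonal, SetLike.mem_coe,
    Submodule.mem_span_singleton, iSup_exists, iSup_comm (ι := V), iSup_iSup_eq_right]

lemma smul_mem_segment_neg_self {V : Type*} [AddCommGroup V] [Module ℝ V] {s : ℝ}
    (hs : s ∈ Set.Icc (-1) 1) (u : V) : s • u ∈ segment ℝ (-u) u :=
  ⟨(1 - s) / 2, (1 + s) / 2, by linarith [hs.2], by linarith [hs.1], by ring, by module⟩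

lemma lintegral_add_projMass_le_lintegral_supTranslate_segment {G : E → ℝ≥0∞}
    (hG : QuasiconcaveOn ℝ Set.univ G) (u : E) :
    (∫⁻ x, G x) + 2 * ‖u‖ₑ * projMass G (ℝ ∙ u)ᗮ ≤
      ∫⁻ x, supTranslate (segment ℝ (-u) u) G x := by
  obtain rfl | hu := eq_or_ne u 0
  · simp
  have hfiber (y : (ℝ ∙ u)ᗮ) : (∫⁻ t : ℝ, G (y + t • u)) + 2 * projFun G (ℝ ∙ u)ᗮ y ≤
      ∫⁻ t : ℝ, supTranslate (segment ℝ (-u) u) G (y + t • u) := by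
    rw [projFun_orthogonal_span_singleton, ENNReal.mul_iSup, ENNReal.add_iSup]
    refine iSup_le fun t₀ => ?_
    calc (∫⁻ t : ℝ, G (y + t • u)) + 2 * G (y + t₀ • u)
        ≤ ∫⁻ t, supTranslate (Set.Icc (-1) 1) (fun t : ℝ => G (y + t • u)) t := by
          simpa using lintegral_add_le_lintegral_supTranslate_Icc (fun t : ℝ => G (y + t • u))
            zero_le_one t₀
      _ ≤ ∫⁻ t : ℝ, supTranslate (segment ℝ (-u) u) G (y + t • u) := by
          refine lintegral_mono fun t => iSup₂_le fun s hs => ?_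
          simpa only [add_smul, add_assoc] using
            le_supTranslate (G := G) (smul_mem_segment_neg_self hs u) (y + t • u)
  have hmeas : AEMeasurable (projFun G (ℝ ∙ u)ᗮ) :=
    aemeasurable_of_quasiconcaveOn_univ (quasiconcaveOn_univ_projFun hG _) _
  calc (∫⁻ x, G x) + 2 * ‖u‖ₑ * projMass G (ℝ ∙ u)ᗮ
      = ∫⁻ y : (ℝ ∙ u)ᗮ, ‖u‖ₑ * ((∫⁻ t : ℝ, G (y + t • u)) + 2 * projFun G (ℝ ∙ u)ᗮ y) := by
        rw [lintegral_eq_lintegral_orthogonal_span_singleton hu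
          (aemeasurable_of_quasiconcaveOn_univ hG _)]
        simp only [mul_add]
        rw [lintegral_add_right' _ ((hmeas.const_mul _).const_mul _), projMass,
          ← lintegral_const_mul' _ _ (by finiteness)]
        ring_nf
    _ ≤ ∫⁻ y : (ℝ ∙ u)ᗮ, ‖u‖ₑ * ∫⁻ t : ℝ, supTranslate (segment ℝ (-u) u) G (y + t • u) := by
        gcongr with y
        exact hfiber y
    _ = ∫⁻ x, supTranslate (segment ℝ (-u) u) G x := by
        rw [lintegral_eq_lintegral_orthogonal_span_singleton hu]
        exact aemeasurable_of_quasiconcaveOn_univ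
          (quasiconcaveOn_univ_supTranslate (convex_segment _ _) hG) _

lemma lintegral_add_sum_projMass_le_lintegral_supTranslate {ι : Type*} {G : E → ℝ≥0∞}
    (hG : QuasiconcaveOn ℝ Set.univ G) (s : Finset ι) (u : ι → E) :
    (∫⁻ x, G x) + ∑ i ∈ s, 2 * ‖u i‖ₑ * projMass G (ℝ ∙ u i)ᗮ ≤
      ∫⁻ x, supTranslate (∑ i ∈ s, segment ℝ (-u i) (u i)) G x := by
  classical
  induction s using Finset.induction_on generalizing G with
  | empty => simp [← Set.singleton_zero]
  | insert i s hi ih =>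
    set S := segment ℝ (-u i) (u i)
    have hG' : QuasiconcaveOn ℝ Set.univ (supTranslate S G) :=
      quasiconcaveOn_univ_supTranslate (convex_segment _ _) hG
    have hle : G ≤ supTranslate S G := fun x => by
      simpa using le_supTranslate (G := G)
        (smul_mem_segment_neg_self (s := 0) (by norm_num) (u i)) x
    calc (∫⁻ x, G x) + ∑ j ∈ insert i s, 2 * ‖u j‖ₑ * projMass G (ℝ ∙ u j)ᗮ
        = ((∫⁻ x, G x) + 2 * ‖u i‖ₑ * projMass G (ℝ ∙ u i)ᗮ)
          + ∑ j ∈ s, 2 * ‖u j‖ₑ * projMass G (ℝ ∙ u j)ᗮ := by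
          rw [Finset.sum_insert hi, add_assoc]
      _ ≤ (∫⁻ x, supTranslate S G x)
          + ∑ j ∈ s, 2 * ‖u j‖ₑ * projMass (supTranslate S G) (ℝ ∙ u j)ᗮ := by
          gcongr with j
          · exact lintegral_add_projMass_le_lintegral_supTranslate_segment hG (u i)
          · exact projMass_mono hle _
      _ ≤ ∫⁻ x, supTranslate (∑ j ∈ s, segment ℝ (-u j) (u j)) (supTranslate S G) x := ih hG'
      _ = ∫⁻ x, supTranslate (∑ j ∈ insert i s, segment ℝ (-u j) (u j)) G x := by
          rw [Finset.sum_insert hi, add_comm, supTranslate_add]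

lemma sum_segment_neg_subset_closedBall {V ι : Type*} [NormedAddCommGroup V]
    [InnerProductSpace ℝ V] {s : Finset ι} {u : ι → V} {ρ : ℝ}
    (hρ₀ : 0 ≤ ρ) (hρ : ∀ θ, ∑ i ∈ s, |⟪u i, θ⟫| ≤ ρ * ‖θ‖) :
    ∑ i ∈ s, segment ℝ (-u i) (u i) ⊆ closedBall 0 ρ := by
  intro p hp
  rw [Set.mem_finsetSum] at hp
  obtain ⟨g, hg, rfl⟩ := hp
  rw [mem_closedBall_zero_iff]
  set p := ∑ i ∈ s, g i
  have hterm {i} (hi : i ∈ s) : ⟪g i, p⟫ ≤ |⟪u i, p⟫| := by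
    obtain ⟨a, b, ha, hb, hab, h⟩ := hg hi
    rw [← h, inner_add_left, inner_smul_left, inner_smul_left, inner_neg_left]
    simp only [conj_trivial]
    calc a * -⟪u i, p⟫ + b * ⟪u i, p⟫ ≤ a * |⟪u i, p⟫| + b * |⟪u i, p⟫| := by
          gcongr
          · exact neg_le_abs _
          · exact le_abs_self _
      _ = |⟪u i, p⟫| := by rw [← add_mul, hab, one_mul]
  have hsq : ‖p‖ * ‖p‖ ≤ ρ * ‖p‖ := by
    rw [← real_inner_self_eq_norm_mul_norm, sum_inner]
    exact (Finset.sum_le_sum fun i => hterm).trans (hρ p)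
  obtain hp | hp := (norm_nonneg p).eq_or_lt
  · rwa [← hp]
  · exact le_of_mul_le_mul_right hsq hp

/-! ### The dilation bound -/

lemma lintegral_comp_inv_smul {V : Type*} [NormedAddCommGroup V] [NormedSpace ℝ V]
    [FiniteDimensional ℝ V] [MeasurableSpace V] [BorelSpace V] (μ : Measure V) [μ.IsAddHaarMeasure]
    (G : V → ℝ≥0∞) {r : ℝ} (hr : r ≠ 0) :
    ∫⁻ x, G (r⁻¹ • x) ∂μ = ENNReal.ofReal (|r| ^ finrank ℝ V) * ∫⁻ x, G x ∂μ := by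
  rw [← (measurableEmbedding_const_smul₀ (inv_ne_zero hr)).lintegral_map,
    Measure.map_addHaar_smul μ (inv_ne_zero hr), lintegral_smul_measure, inv_pow, inv_inv, abs_pow,
    smul_eq_mul]

/-- `G` grows by a factor at most `exp (c ε)` when its argument is first moved by at most `ε` and
then contracted by `1 + ε`. For log-concave `G` this follows from the bound
`exp (-c) * sup G ≤ G` on the unit ball, and it is inherited by projections of `G`. -/
def DilationBound {V : Type*} [NormedAddCommGroup V] [NormedSpace ℝ V] (c : ℝ) (G : V → ℝ≥0∞) :
    Prop :=
  ∀ ε : ℝ, 0 < ε → ∀ x z : V, ‖x - z‖ ≤ ε →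
    G z ≤ ENNReal.ofReal (Real.exp (c * ε)) * G ((1 + ε)⁻¹ • x)

namespace DilationBound

lemma comp_linearIsometry {V W : Type*} [NormedAddCommGroup V] [NormedSpace ℝ V]
    [NormedAddCommGroup W] [NormedSpace ℝ W] {c : ℝ} {G : W → ℝ≥0∞} (hG : DilationBound c G)
    (L : V →ₗᵢ[ℝ] W) : DilationBound c (G ∘ L) := fun ε hε x z hxz => by
  have hL : ‖L x - L z‖ ≤ ε := by rwa [← map_sub, L.norm_map]
  simpa using hG ε hε (L x) (L z) hL

protected lemma projFun {V : Type*} [NormedAddCommGroup V] [InnerProductSpace ℝ V] {c : ℝ}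
    {F : V → ℝ≥0∞} (hF : DilationBound c F) (H : Submodule ℝ V) :
    DilationBound c (projFun F H) := by
  intro ε hε x z hxz
  refine iSup₂_le fun p hp => ?_
  have hmem : (1 + ε)⁻¹ • p ∈ (Hᗮ : Set V) := Submodule.smul_mem _ _ hp
  calc F (z + p) ≤ ENNReal.ofReal (Real.exp (c * ε)) * F ((1 + ε)⁻¹ • (x + p)) :=
        hF ε hε _ _ (by simpa using hxz)
    _ ≤ ENNReal.ofReal (Real.exp (c * ε)) * _root_.projFun F H ((1 + ε)⁻¹ • x) := by
        gcongr
        rw [smul_add]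
        exact le_supTranslate hmem _

variable {c : ℝ} {G : E → ℝ≥0∞}

lemma lintegral_supTranslate_closedBall_le (hG : DilationBound c G) {ε : ℝ} (hε : 0 < ε) :
    ∫⁻ x, supTranslate (closedBall 0 ε) G x ≤
      ENNReal.ofReal (Real.exp ((c + finrank ℝ E) * ε)) * ∫⁻ x, G x := by
  have hpow : (1 + ε) ^ finrank ℝ E ≤ Real.exp (finrank ℝ E * ε) := by
    rw [Real.exp_nat_mul]
    gcongr
    linarith [Real.add_one_le_exp ε]
  calc ∫⁻ x, supTranslate (closedBall 0 ε) G x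
      ≤ ∫⁻ x, ENNReal.ofReal (Real.exp (c * ε)) * G ((1 + ε)⁻¹ • x) :=
        lintegral_mono fun x => iSup₂_le fun p hp => hG ε hε _ _ (by simpa using hp)
    _ = ENNReal.ofReal (Real.exp (c * ε) * (1 + ε) ^ finrank ℝ E) * ∫⁻ x, G x := by
        rw [lintegral_const_mul' _ _ ENNReal.ofReal_ne_top,
          lintegral_comp_inv_smul _ _ (by positivity), abs_of_pos (by positivity), ← mul_assoc,
          ENNReal.ofReal_mul (by positivity)]
    _ ≤ ENNReal.ofReal (Real.exp ((c + finrank ℝ E) * ε)) * ∫⁻ x, G x := by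
        rw [add_mul, Real.exp_add]
        gcongr

lemma projFun_mul_volume_closedBall_le (hG : DilationBound c G) (H : Submodule ℝ E) (y : H) :
    projFun G H y * volume (closedBall (0 : Hᗮ) 1) ≤
      ENNReal.ofReal (Real.exp c) * ∫⁻ w : Hᗮ, G ((2 : ℝ)⁻¹ • (y + w)) := by
  simp only [projFun, supTranslate, ENNReal.iSup_mul]
  refine iSup₂_le fun p hp => ?_
  have hpt (w : Hᗮ) (hw : w ∈ closedBall 0 1) :
      G (y + p) ≤ ENNReal.ofReal (Real.exp c) * G ((2 : ℝ)⁻¹ • (y + (⟨p, hp⟩ + w : Hᗮ))) := by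
    have := hG 1 one_pos (y + (⟨p, hp⟩ + w : Hᗮ)) (y + p)
      (by simpa [add_sub_add_left_eq_sub] using hw)
    simpa only [mul_one, one_add_one_eq_two] using this
  calc G (y + p) * volume (closedBall (0 : Hᗮ) 1)
      = ∫⁻ _ in closedBall (0 : Hᗮ) 1, G (y + p) := (setLIntegral_const _ _).symm
    _ ≤ ∫⁻ w in closedBall (0 : Hᗮ) 1,
          ENNReal.ofReal (Real.exp c) * G ((2 : ℝ)⁻¹ • (y + (⟨p, hp⟩ + w : Hᗮ))) :=
        setLIntegral_mono' measurableSet_closedBall hpt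
    _ ≤ ∫⁻ w : Hᗮ, ENNReal.ofReal (Real.exp c) * G ((2 : ℝ)⁻¹ • (y + (⟨p, hp⟩ + w : Hᗮ))) :=
        setLIntegral_le_lintegral _ _
    _ = ENNReal.ofReal (Real.exp c) * ∫⁻ w : Hᗮ, G ((2 : ℝ)⁻¹ • (y + w)) := by
        rw [lintegral_const_mul' _ _ ENNReal.ofReal_ne_top,
          lintegral_add_left_eq_self fun w : Hᗮ => G ((2 : ℝ)⁻¹ • (y + w))]

lemma projMass_mul_volume_closedBall_le (hG : DilationBound c G)
    (hqc : QuasiconcaveOn ℝ Set.univ G) (H : Submodule ℝ E) :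
    projMass G H * volume (closedBall (0 : Hᗮ) 1) ≤
      ENNReal.ofReal (Real.exp c) * (ENNReal.ofReal (2 ^ finrank ℝ E) * ∫⁻ x, G x) := by
  have hvol : volume (closedBall (0 : Hᗮ) 1) ≠ ∞ := measure_closedBall_lt_top.ne
  have hmeas : AEMeasurable fun x => G ((2 : ℝ)⁻¹ • x) :=
    aemeasurable_of_quasiconcaveOn_univ
      (quasiconcaveOn_univ_comp_linearMap hqc ((2 : ℝ)⁻¹ • LinearMap.id)) _
  calc projMass G H * volume (closedBall (0 : Hᗮ) 1)
      = ∫⁻ y : H, projFun G H y * volume (closedBall (0 : Hᗮ) 1) :=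
        (lintegral_mul_const' _ _ hvol).symm
    _ ≤ ∫⁻ y : H, ENNReal.ofReal (Real.exp c) * ∫⁻ w : Hᗮ, G ((2 : ℝ)⁻¹ • (y + w)) :=
        lintegral_mono fun y => hG.projFun_mul_volume_closedBall_le H y
    _ = ENNReal.ofReal (Real.exp c) * (ENNReal.ofReal (2 ^ finrank ℝ E) * ∫⁻ x, G x) := by
        rw [lintegral_const_mul' _ _ ENNReal.ofReal_ne_top,
          ← lintegral_eq_lintegral_lintegral_orthogonal H hmeas,
          lintegral_comp_inv_smul _ _ two_ne_zero, abs_two]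

end DilationBound

lemma le_ofReal_mul_of_forall_add_le_exp {C : ℝ} {I S : ℝ≥0∞} (hI : I ≠ ∞)
    (h : ∀ ε : ℝ, 0 < ε → I + ENNReal.ofReal ε * S ≤ ENNReal.ofReal (Real.exp (C * ε)) * I) :
    S ≤ ENNReal.ofReal C * I := by
  have hS : S ≠ ∞ := by
    rintro rfl
    have := h 1 one_pos
    simp [ENNReal.mul_eq_top, hI] at this
  lift I to ℝ≥0 using hI
  lift S to ℝ≥0 using hS
  have hslope : Tendsto (fun ε : ℝ => ε⁻¹ • (Real.exp (C * (0 + ε)) - Real.exp (C * 0)) * I)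
      (𝓝[>] 0) (𝓝 (C * I)) := by
    have hderiv : HasDerivAt (fun ε : ℝ => Real.exp (C * ε)) C 0 := by
      simpa using ((hasDerivAt_id (0 : ℝ)).const_mul C).exp
    exact hderiv.tendsto_slope_zero_right.mul_const _
  have hle : (S : ℝ) ≤ C * I := by
    refine ge_of_tendsto hslope ?_
    filter_upwards [self_mem_nhdsWithin] with ε (hε : 0 < ε)
    have h' := ENNReal.toReal_mono (by finiteness) (h ε hε)
    rw [ENNReal.toReal_add (by finiteness) (by finiteness)] at h'
    simp only [ENNReal.coe_toReal, ENNReal.toReal_mul, ENNReal.toReal_ofReal hε.le,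
      ENNReal.toReal_ofReal (Real.exp_pos _).le] at h'
    rw [smul_eq_mul, mul_assoc, ← div_eq_inv_mul, le_div_iff₀ hε]
    simp only [zero_add, mul_zero, Real.exp_zero]
    linarith
  calc (S : ℝ≥0∞) = ENNReal.ofReal S := ENNReal.ofReal_coe_nnreal.symm
    _ ≤ ENNReal.ofReal (C * I) := ENNReal.ofReal_le_ofReal hle
    _ = ENNReal.ofReal C * I := by rw [ENNReal.ofReal_mul' I.coe_nonneg, ENNReal.ofReal_coe_nnreal]

lemma sum_projMass_le_of_sum_abs_inner_le {ι : Type*} {c ρ : ℝ} {G : E → ℝ≥0∞}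
    (hG : QuasiconcaveOn ℝ Set.univ G) (hc : DilationBound c G) (hint : ∫⁻ x, G x ≠ ∞)
    (hρ₀ : 0 < ρ) {s : Finset ι} {u : ι → E} (hρ : ∀ θ, ∑ i ∈ s, |⟪u i, θ⟫| ≤ ρ * ‖θ‖) :
    ∑ i ∈ s, 2 * ‖u i‖ₑ * projMass G (ℝ ∙ u i)ᗮ ≤
      ENNReal.ofReal ((c + finrank ℝ E) * ρ) * ∫⁻ x, G x := by
  refine le_ofReal_mul_of_forall_add_le_exp hint fun ε hε => ?_
  have hball : ∑ i ∈ s, segment ℝ (-(ε • u i)) (ε • u i) ⊆ closedBall 0 (ρ * ε) := by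
    refine sum_segment_neg_subset_closedBall (by positivity) fun θ => ?_
    simp only [inner_smul_left, conj_trivial, abs_mul, abs_of_pos hε, ← Finset.mul_sum]
    calc ε * ∑ i ∈ s, |⟪u i, θ⟫| ≤ ε * (ρ * ‖θ‖) := by gcongr; exact hρ θ
      _ = ρ * ε * ‖θ‖ := by ring
  calc (∫⁻ x, G x) + ENNReal.ofReal ε * ∑ i ∈ s, 2 * ‖u i‖ₑ * projMass G (ℝ ∙ u i)ᗮ
      = (∫⁻ x, G x) + ∑ i ∈ s, 2 * ‖ε • u i‖ₑ * projMass G (ℝ ∙ (ε • u i))ᗮ := by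
        simp only [Submodule.span_singleton_smul_eq hε.ne'.isUnit, enorm_smul,
          Real.enorm_of_nonneg hε.le, Finset.mul_sum]
        congr! 2
        ring
    _ ≤ ∫⁻ x, supTranslate (∑ i ∈ s, segment ℝ (-(ε • u i)) (ε • u i)) G x :=
        lintegral_add_sum_projMass_le_lintegral_supTranslate hG s _
    _ ≤ ∫⁻ x, supTranslate (closedBall 0 (ρ * ε)) G x :=
        lintegral_mono (supTranslate_mono hball)
    _ ≤ ENNReal.ofReal (Real.exp ((c + finrank ℝ E) * ρ * ε)) * ∫⁻ x, G x := by
        rw [mul_assoc _ ρ]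
        exact hc.lintegral_supTranslate_closedBall_le (by positivity)

lemma orthogonal_map_linearIsometry {V W : Type*} [NormedAddCommGroup V] [InnerProductSpace ℝ V]
    [FiniteDimensional ℝ V] [NormedAddCommGroup W] [InnerProductSpace ℝ W] (j : V →ₗᵢ[ℝ] W)
    (K : Submodule ℝ V) :
    (K.map j.toLinearMap)ᗮ = Kᗮ.map j.toLinearMap ⊔ (LinearMap.range j.toLinearMap)ᗮ := by
  apply le_antisymm
  · intro z hz
    obtain ⟨_, ⟨w, rfl⟩, z', hz', rfl⟩ :=
      (LinearMap.range j.toLinearMap).exists_add_mem_mem_orthogonal z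
    refine Submodule.add_mem_sup ⟨w, fun k hk => ?_, rfl⟩ hz'
    have hkz := hz (j k) ⟨k, hk, rfl⟩
    rw [inner_add_right, hz' (j k) ⟨k, rfl⟩, add_zero] at hkz
    simpa using hkz
  · refine sup_le ?_ (Submodule.orthogonal_le (LinearMap.map_le_range))
    rintro _ ⟨w, hw, rfl⟩ _ ⟨k, hk, rfl⟩
    simpa using hw k hk

variable {V : Type*} [NormedAddCommGroup V] [InnerProductSpace ℝ V] [FiniteDimensional ℝ V]
  [MeasurableSpace V] [BorelSpace V]

lemma projMass_map_linearIsometry (F : E → ℝ≥0∞) (j : V →ₗᵢ[ℝ] E) (K : Submodule ℝ V) :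
    projMass F (K.map j.toLinearMap) =
      projMass (fun y => supTranslate ((LinearMap.range j.toLinearMap)ᗮ : Set E) F (j y)) K := by
  let e : K ≃ₗᵢ[ℝ] K.map j.toLinearMap :=
    ⟨K.equivMapOfInjective j.toLinearMap j.injective, fun y => j.norm_map y⟩
  have hpt (y : K) : projFun F (K.map j.toLinearMap) (e y) =
      projFun (fun y => supTranslate ((LinearMap.range j.toLinearMap)ᗮ : Set E) F (j y)) K y := by
    rw [projFun, orthogonal_map_linearIsometry, Submodule.coe_sup, supTranslate_add,
      Submodule.map_coe, projFun, supTranslate, supTranslate, iSup_image]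
    simp only [map_add]
    rfl
  rw [projMass, ← e.measurePreserving.lintegral_comp_emb e.toHomeomorph.measurableEmbedding]
  exact lintegral_congr hpt

lemma projMass_projFun (F : E → ℝ≥0∞) (H : Submodule ℝ E) (K : Submodule ℝ H) :
    projMass (projFun F H) K = projMass F (K.map H.subtype) := by
  have hrange : LinearMap.range H.subtypeₗᵢ.toLinearMap = H := H.range_subtype
  have h := projMass_map_linearIsometry F H.subtypeₗᵢ K
  rw [hrange] at h
  exact h.symm

lemma projMass_comp_linearIsometryEquiv (F : E → ℝ≥0∞) (e : V ≃ₗᵢ[ℝ] E) (K : Submodule ℝ V) :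
    projMass (F ∘ e) K = projMass F (K.map e.toLinearIsometry.toLinearMap) := by
  have hrange : LinearMap.range e.toLinearIsometry.toLinearMap = ⊤ :=
    LinearMap.range_eq_top.2 e.surjective
  rw [projMass_map_linearIsometry F e.toLinearIsometry K, hrange, Submodule.top_orthogonal_eq_bot,
    Submodule.bot_coe, supTranslate_singleton_zero]
  rfl

/-! ### Moments of the unit ball -/

lemma toReal_volume_closedBall_eq_ballVol {d : ℕ} (hd : finrank ℝ E = d) :
    (volume (closedBall (0 : E) 1)).toReal = ballVol d := by
  subst hd
  let e := (stdOrthonormalBasis ℝ E).repr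
  rw [ballVol, ← e.measurePreserving.measure_preimage measurableSet_closedBall.nullMeasurableSet,
    e.preimage_closedBall, map_zero]

lemma ballVol_pos (d : ℕ) : 0 < ballVol d :=
  ENNReal.toReal_pos (measure_closedBall_pos _ _ one_pos).ne' measure_closedBall_lt_top.ne

lemma integral_closedBall_norm {k : ℕ} (hk : finrank ℝ E = k + 1) :
    ∫ x in closedBall (0 : E) 1, ‖x‖ = (k + 1) * ballVol (k + 1) / (k + 2) := by
  have : Nontrivial E := nontrivial_of_finrank_pos (R := ℝ) (by omega)
  have hind (x : E) : (closedBall (0 : E) 1).indicator (fun x => ‖x‖) x =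
      (Set.Iic (1 : ℝ)).indicator id ‖x‖ := by
    simp [Set.indicator]
  have hradial : ∫ r in Set.Ioi (0 : ℝ), r ^ k • (Set.Iic (1 : ℝ)).indicator id r =
      1 / (k + 2) := by
    have hmul (r : ℝ) : r ^ k • (Set.Iic (1 : ℝ)).indicator id r =
        (Set.Iic (1 : ℝ)).indicator (fun r => r ^ (k + 1)) r := by
      rw [← Set.indicator_const_smul_apply]
      rfl
    simp_rw [hmul]
    rw [setIntegral_indicator measurableSet_Iic, Set.Ioi_inter_Iic,
      ← intervalIntegral.integral_of_le zero_le_one, integral_pow]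
    push_cast
    ring
  rw [← integral_indicator measurableSet_closedBall]
  simp_rw [hind]
  rw [integral_fun_norm_addHaar volume, hk, Nat.add_sub_cancel, hradial, measureReal_def,
    ← Measure.addHaar_closedBall_eq_addHaar_ball, toReal_volume_closedBall_eq_ballVol hk]
  simp only [nsmul_eq_mul, smul_eq_mul]
  push_cast
  ring

lemma integral_abs_mul_sqrt_one_sub_sq_pow (k : ℕ) :
    ∫ t in Set.Icc (-1 : ℝ) 1, |t| * √(1 - t ^ 2) ^ k = 2 / (k + 2) := by
  have hcont : Continuous fun t : ℝ => |t| * √(1 - t ^ 2) ^ k := by fun_prop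
  have hderiv (t : ℝ) (ht : t ∈ Set.Ioo (0 : ℝ) 1) :
      HasDerivAt (fun t : ℝ => -√(1 - t ^ 2) ^ (k + 2) / (k + 2)) (|t| * √(1 - t ^ 2) ^ k) t := by
    have hpos : 0 < 1 - t ^ 2 := by nlinarith [ht.1, ht.2]
    have hsqrt := (((hasDerivAt_pow 2 t).const_sub 1).sqrt hpos.ne').pow (k + 2)
    refine (hsqrt.neg.div_const ((k : ℝ) + 2)).congr_deriv ?_
    have := (Real.sqrt_pos.2 hpos).ne'
    simp only [abs_of_pos ht.1, Nat.add_succ_sub_one, pow_succ _ k]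
    push_cast
    field_simp
  have hhalf : ∫ t in (0 : ℝ)..1, |t| * √(1 - t ^ 2) ^ k = 1 / (k + 2) := by
    rw [intervalIntegral.integral_eq_sub_of_hasDerivAt_of_le zero_le_one (by fun_prop) hderiv
      (hcont.intervalIntegrable _ _)]
    simp
    ring
  have hneg : ∫ t in (-1 : ℝ)..0, |t| * √(1 - t ^ 2) ^ k = 1 / (k + 2) := by
    have := intervalIntegral.integral_comp_neg (a := 0) (b := 1)
      fun t : ℝ => |t| * √(1 - t ^ 2) ^ k
    simp only [abs_neg, even_two.neg_pow, neg_zero] at this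
    rw [← this, hhalf]
  rw [integral_Icc_eq_integral_Ioc, ← intervalIntegral.integral_of_le (by norm_num),
    ← intervalIntegral.integral_add_adjacent_intervals (hcont.intervalIntegrable _ 0)
      (hcont.intervalIntegrable _ _), hhalf, hneg]
  ring

lemma indicator_closedBall_enorm_inner {V : Type*} [NormedAddCommGroup V] [InnerProductSpace ℝ V]
    {e : V} (he : ‖e‖ = 1) (t : ℝ) (z : (ℝ ∙ e)ᗮ) :
    (closedBall (0 : V) 1).indicator (fun x => ‖⟪x, e⟫‖ₑ) (t • e + z) =
      (Set.Icc (-1) 1).indicator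
        (fun t => (closedBall (0 : (ℝ ∙ e)ᗮ) √(1 - t ^ 2)).indicator (fun _ => ‖t‖ₑ) z) t := by
  have hze : ⟪(z : V), e⟫ = 0 := by
    rw [real_inner_comm]
    exact Submodule.mem_orthogonal_singleton_iff_inner_right.1 z.2
  have hsq : ‖t • e + z‖ ^ 2 = t ^ 2 + ‖z‖ ^ 2 := by
    rw [norm_add_sq_real, inner_smul_left, real_inner_comm, hze, norm_smul, he]
    simp
  have hiff : t • e + z ∈ closedBall (0 : V) 1 ↔
      t ∈ Set.Icc (-1) 1 ∧ z ∈ closedBall (0 : (ℝ ∙ e)ᗮ) √(1 - t ^ 2) := by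
    rw [mem_closedBall_zero_iff, mem_closedBall_zero_iff, ← sq_le_one_iff₀ (norm_nonneg _), hsq,
      Set.mem_Icc, ← abs_le, ← sq_le_one_iff_abs_le_one]
    constructor
    · intro h
      have ht : t ^ 2 ≤ 1 := by nlinarith [sq_nonneg ‖z‖]
      exact ⟨ht, Real.le_sqrt_of_sq_le (by linarith)⟩
    · rintro ⟨ht, hz⟩
      have := (Real.le_sqrt (norm_nonneg z) (by linarith)).1 hz
      linarith
  have hinner : ⟪t • e + z, e⟫ = t := by
    rw [inner_add_left, hze, inner_smul_left, real_inner_self_eq_norm_sq, he]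
    simp
  classical
  simp only [Set.indicator_apply, hiff, hinner, ite_and]

lemma lintegral_closedBall_enorm_inner {k : ℕ} (hk : finrank ℝ E = k + 1) {e : E}
    (he : ‖e‖ = 1) :
    ∫⁻ x in closedBall (0 : E) 1, ‖⟪x, e⟫‖ₑ = ENNReal.ofReal (2 * ballVol k / (k + 2)) := by
  have hdim : finrank ℝ (ℝ ∙ e)ᗮ = k := by
    have : Fact (finrank ℝ E = k + 1) := ⟨hk⟩
    exact Submodule.finrank_orthogonal_span_singleton (by rintro rfl; simp at he)
  have hvol (t : ℝ) : volume (closedBall (0 : (ℝ ∙ e)ᗮ) √(1 - t ^ 2)) =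
      ENNReal.ofReal (√(1 - t ^ 2) ^ k * ballVol k) := by
    rw [Measure.addHaar_closedBall' _ _ (by positivity), hdim, ENNReal.ofReal_mul (by positivity),
      ← toReal_volume_closedBall_eq_ballVol hdim,
      ENNReal.ofReal_toReal measure_closedBall_lt_top.ne]
  let L := LinearIsometryEquiv.toSpanUnitSingleton (𝕜 := ℝ) e he
  have hmeas : AEMeasurable ((closedBall (0 : E) 1).indicator fun x => ‖⟪x, e⟫‖ₑ) :=
    ((by fun_prop : Measurable fun x : E => ‖⟪x, e⟫‖ₑ).indicator
      measurableSet_closedBall).aemeasurable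
  rw [← lintegral_indicator measurableSet_closedBall,
    lintegral_eq_lintegral_lintegral_orthogonal (ℝ ∙ e) hmeas,
    ← L.measurePreserving.lintegral_comp_emb L.toHomeomorph.measurableEmbedding]
  calc ∫⁻ t : ℝ, ∫⁻ z : (ℝ ∙ e)ᗮ, (closedBall (0 : E) 1).indicator (fun x => ‖⟪x, e⟫‖ₑ) (L t + z)
      = ∫⁻ t in Set.Icc (-1 : ℝ) 1, ENNReal.ofReal (|t| * √(1 - t ^ 2) ^ k * ballVol k) := by
        rw [← lintegral_indicator measurableSet_Icc]
        refine lintegral_congr fun t => ?_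
        simp only [L, LinearIsometryEquiv.toSpanUnitSingleton_apply,
          indicator_closedBall_enorm_inner he]
        by_cases ht : t ∈ Set.Icc (-1) 1
        · simp only [Set.indicator_of_mem ht]
          rw [lintegral_indicator_const measurableSet_closedBall, hvol, mul_assoc,
            ENNReal.ofReal_mul (abs_nonneg t), ← Real.enorm_eq_ofReal_abs]
        · simp [Set.indicator_of_notMem ht]
    _ = ENNReal.ofReal (2 * ballVol k / (k + 2)) := by
        rw [← ofReal_integral_eq_lintegral_ofReal]
        · rw [integral_mul_const, integral_abs_mul_sqrt_one_sub_sq_pow]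
          ring_nf
        · exact (by fun_prop : Continuous _).integrableOn_Icc
        · have := ballVol_pos k
          exact ae_of_all _ fun t => by positivity

lemma integral_closedBall_abs_inner {k : ℕ} (hk : finrank ℝ E = k + 1) (θ : E) :
    ∫ x in closedBall (0 : E) 1, |⟪x, θ⟫| = 2 * ballVol k / (k + 2) * ‖θ‖ := by
  obtain rfl | hθ := eq_or_ne θ 0
  · simp
  set e := ‖θ‖⁻¹ • θ
  have he : ‖e‖ = 1 := norm_smul_inv_norm hθ
  have hθe : θ = ‖θ‖ • e := (smul_inv_smul₀ (norm_ne_zero_iff.2 hθ) θ).symm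
  have hpt (x : E) : |⟪x, θ⟫| = ‖⟪x, e⟫‖ * ‖θ‖ := by
    conv_lhs => rw [hθe, inner_smul_right, abs_mul, abs_norm, mul_comm]
    rfl
  simp_rw [hpt]
  rw [integral_mul_const, integral_norm_eq_lintegral_enorm (by fun_prop),
    lintegral_closedBall_enorm_inner hk he, ENNReal.toReal_ofReal]
  have := ballVol_pos k
  positivity

lemma exists_finset_abs_sum_sub_integral_le {Ω V : Type*} [MeasurableSpace Ω] {μ : Measure Ω}
    [NormedAddCommGroup V] [NormedSpace ℝ V] {X : Ω → V} (hX : Integrable X μ) {η : ℝ}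
    (hη : 0 < η) :
    ∃ (s : Finset V) (u : V → V), ∀ (K : ℝ≥0) (p : V → ℝ), LipschitzWith K p →
      (∀ t : ℝ, 0 ≤ t → ∀ x, p (t • x) = t * p x) →
      |∑ v ∈ s, p (u v) - ∫ ω, p (X ω) ∂μ| ≤ K * η := by
  obtain ⟨φ, hφ, hφmem⟩ := (memLp_one_iff_integrable.2 hX).exists_simpleFunc_eLpNorm_sub_lt
    ENNReal.one_ne_top (ENNReal.ofReal_pos.2 hη).ne'
  have hφint : Integrable φ μ := memLp_one_iff_integrable.1 hφmem
  have hdist : ∫ ω, ‖φ ω - X ω‖ ∂μ ≤ η := by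
    rw [eLpNorm_one_eq_lintegral_enorm] at hφ
    simp_rw [norm_sub_rev (φ _)]
    exact (integral_norm_eq_lintegral_enorm (hX.sub hφint).aestronglyMeasurable).trans_le
      (ENNReal.toReal_le_of_le_ofReal hη.le hφ.le)
  refine ⟨φ.range, fun v => μ.real (φ ⁻¹' {v}) • v, fun K p hp hhom => ?_⟩
  have hp0 : p 0 = 0 := by simpa using hhom 0 le_rfl 0
  have hint {Y : Ω → V} (hY : Integrable Y μ) : Integrable (fun ω => p (Y ω)) μ :=
    memLp_one_iff_integrable.1 (hp.comp_memLp hp0 (memLp_one_iff_integrable.2 hY))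
  have hsum : ∑ v ∈ φ.range, p (μ.real (φ ⁻¹' {v}) • v) = ∫ ω, p (φ ω) ∂μ := by
    simp only [hhom _ measureReal_nonneg]
    exact (φ.map_integral p hφint hp0).symm.trans
      (SimpleFunc.integral_eq_integral (φ.map p) (hint hφint))
  calc |∑ v ∈ φ.range, p (μ.real (φ ⁻¹' {v}) • v) - ∫ ω, p (X ω) ∂μ|
      = |∫ ω, p (φ ω) - p (X ω) ∂μ| := by rw [hsum, integral_sub (hint hφint) (hint hX)]
    _ ≤ ∫ ω, K * ‖φ ω - X ω‖ ∂μ :=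
        norm_integral_le_of_norm_le ((hφint.sub hX).norm.const_mul _)
          (ae_of_all _ fun ω => hp.norm_sub_le _ _)
    _ ≤ K * η := by
        rw [integral_const_mul]
        gcongr

lemma exists_finset_sum_abs_inner_le_and_le_sum_norm {k : ℕ} (hk : finrank ℝ E = k + 1) {η : ℝ}
    (hη : 0 < η) :
    ∃ (s : Finset E) (u : E → E),
      (∀ θ, ∑ v ∈ s, |⟪u v, θ⟫| ≤ (2 * ballVol k / (k + 2) + η) * ‖θ‖) ∧
      (k + 1) * ballVol (k + 1) / (k + 2) - η ≤ ∑ v ∈ s, ‖u v‖ := by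
  have hX : Integrable (fun x : E => x) (volume.restrict (closedBall 0 1)) :=
    continuousOn_id.integrableOn_compact (isCompact_closedBall 0 1)
  obtain ⟨s, u, h⟩ := exists_finset_abs_sum_sub_integral_le hX hη
  refine ⟨s, u, fun θ => ?_, ?_⟩
  · have hlip : LipschitzWith ‖θ‖₊ fun x : E => |⟪x, θ⟫| :=
      LipschitzWith.of_dist_le_mul fun x y => by
        rw [Real.dist_eq, dist_eq_norm, coe_nnnorm, mul_comm]
        calc |(|⟪x, θ⟫| - |⟪y, θ⟫|)| ≤ |⟪x - y, θ⟫| := by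
              rw [inner_sub_left]
              exact abs_abs_sub_abs_le _ _
          _ ≤ ‖x - y‖ * ‖θ‖ := abs_real_inner_le_norm _ _
    have := h _ _ hlip fun t ht x => by
      rw [inner_smul_left, abs_mul, conj_trivial, abs_of_nonneg ht]
    rw [integral_closedBall_abs_inner hk, coe_nnnorm] at this
    linarith [(abs_le.1 this).2]
  · have := h 1 (fun x => ‖x‖) lipschitzWith_one_norm fun t ht x => norm_smul_of_nonneg ht x
    rw [integral_closedBall_norm hk, NNReal.coe_one] at this
    linarith [(abs_le.1 this).1]

/-! ### Averaging over a family of functions -/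

lemma sum_lintegral_le_lintegral_sum {Ω ι : Type*} [MeasurableSpace Ω] (ν : Measure Ω)
    (s : Finset ι) (f : ι → Ω → ℝ≥0∞) :
    ∑ i ∈ s, ∫⁻ ω, f i ω ∂ν ≤ ∫⁻ ω, ∑ i ∈ s, f i ω ∂ν := by
  classical
  induction s using Finset.induction_on with
  | empty => simp
  | insert i s hi ih =>
    simp only [Finset.sum_insert hi]
    exact (add_le_add_right ih _).trans (le_lintegral_add _ _)

lemma ofReal_sum_norm_mul_le_of_forall_le_lintegral_projMass {Ω ι : Type*} [MeasurableSpace Ω]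
    {ν : Measure Ω} {c ρ : ℝ} {G : Ω → E → ℝ≥0∞}
    (hqc : ∀ ω, QuasiconcaveOn ℝ Set.univ (G ω)) (hc : ∀ ω, DilationBound c (G ω))
    (hfin : ∀ ω, ∫⁻ x, G ω x ≠ ∞) {A : ℝ≥0∞}
    (hA : ∀ v : E, v ≠ 0 → A ≤ ∫⁻ ω, projMass (G ω) (ℝ ∙ v)ᗮ ∂ν) (hρ₀ : 0 < ρ)
    {s : Finset ι} {u : ι → E} (hρ : ∀ θ, ∑ i ∈ s, |⟪u i, θ⟫| ≤ ρ * ‖θ‖) :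
    ENNReal.ofReal (2 * ∑ i ∈ s, ‖u i‖) * A ≤
      ENNReal.ofReal ((c + finrank ℝ E) * ρ) * ∫⁻ ω, (∫⁻ x, G ω x) ∂ν := by
  have hA' (v : E) : 2 * ‖v‖ₑ * A ≤ ∫⁻ ω, 2 * ‖v‖ₑ * projMass (G ω) (ℝ ∙ v)ᗮ ∂ν := by
    rcases eq_or_ne v 0 with rfl | hv
    · simp
    · exact (mul_le_mul_right (hA v hv) _).trans (lintegral_const_mul_le _ _)
  calc ENNReal.ofReal (2 * ∑ i ∈ s, ‖u i‖) * A = ∑ i ∈ s, 2 * ‖u i‖ₑ * A := by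
        rw [ENNReal.ofReal_mul two_pos.le, ENNReal.ofReal_sum_of_nonneg fun i _ => norm_nonneg _,
          ENNReal.ofReal_ofNat, Finset.mul_sum, Finset.sum_mul]
        simp only [ofReal_norm]
    _ ≤ ∑ i ∈ s, ∫⁻ ω, 2 * ‖u i‖ₑ * projMass (G ω) (ℝ ∙ u i)ᗮ ∂ν :=
        Finset.sum_le_sum fun i _ => hA' (u i)
    _ ≤ ∫⁻ ω, ∑ i ∈ s, 2 * ‖u i‖ₑ * projMass (G ω) (ℝ ∙ u i)ᗮ ∂ν :=
        sum_lintegral_le_lintegral_sum ν s _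
    _ ≤ ∫⁻ ω, ENNReal.ofReal ((c + finrank ℝ E) * ρ) * (∫⁻ x, G ω x) ∂ν :=
        lintegral_mono fun ω =>
          sum_projMass_le_of_sum_abs_inner_le (hqc ω) (hc ω) (hfin ω) hρ₀ hρ
    _ = _ := lintegral_const_mul' _ _ ENNReal.ofReal_ne_top

lemma ofReal_mul_le_ofReal_mul_of_forall_pos {a b C : ℝ} {A B : ℝ≥0∞} (hB : B ≠ ∞)
    (hb : 0 < b)
    (h : ∀ η > 0, ENNReal.ofReal (2 * (b - η)) * A ≤ ENNReal.ofReal (C * (a + η)) * B) :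
    ENNReal.ofReal (2 * b) * A ≤ ENNReal.ofReal (C * a) * B := by
  have hl : Tendsto (fun η : ℝ => ENNReal.ofReal (2 * (b - η)) * A) (𝓝[>] 0)
      (𝓝 (ENNReal.ofReal (2 * b) * A)) := by
    refine ENNReal.Tendsto.mul_const (ENNReal.tendsto_ofReal ?_) (.inl (by simpa))
    exact (Continuous.tendsto' (by fun_prop) _ _ (by simp)).mono_left nhdsWithin_le_nhds
  have hr : Tendsto (fun η : ℝ => ENNReal.ofReal (C * (a + η)) * B) (𝓝[>] 0)
      (𝓝 (ENNReal.ofReal (C * a) * B)) := by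
    refine ENNReal.Tendsto.mul_const (ENNReal.tendsto_ofReal ?_) (.inr hB)
    exact (Continuous.tendsto' (by fun_prop) _ _ (by simp)).mono_left nhdsWithin_le_nhds
  exact le_of_tendsto_of_tendsto hl hr (eventually_mem_nhdsWithin.mono h)

lemma ofReal_mul_le_of_forall_le_lintegral_projMass {Ω : Type*} [MeasurableSpace Ω] {ν : Measure Ω}
    {k : ℕ} (hk : finrank ℝ E = k + 1) {c : ℝ} {G : Ω → E → ℝ≥0∞}
    (hqc : ∀ ω, QuasiconcaveOn ℝ Set.univ (G ω)) (hc : ∀ ω, DilationBound c (G ω))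
    (hfin : ∀ ω, ∫⁻ x, G ω x ≠ ∞) (hint : ∫⁻ ω, (∫⁻ x, G ω x) ∂ν ≠ ∞) {A : ℝ≥0∞}
    (hA : ∀ v : E, v ≠ 0 → A ≤ ∫⁻ ω, projMass (G ω) (ℝ ∙ v)ᗮ ∂ν) :
    ENNReal.ofReal ((k + 1) * ballVol (k + 1)) * A ≤
      ENNReal.ofReal ((c + k + 1) * ballVol k) * ∫⁻ ω, (∫⁻ x, G ω x) ∂ν := by
  have hω := ballVol_pos k
  have hω' := ballVol_pos (k + 1)
  have hlim := ofReal_mul_le_ofReal_mul_of_forall_pos hint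
    (a := 2 * ballVol k / (k + 2)) (b := (k + 1) * ballVol (k + 1) / (k + 2)) (C := c + (k + 1))
    (by positivity) fun η hη => by
      obtain ⟨s, u, hinner, hnorm⟩ := exists_finset_sum_abs_inner_le_and_le_sum_norm hk hη
      have h := ofReal_sum_norm_mul_le_of_forall_le_lintegral_projMass hqc hc hfin hA
        (by positivity) hinner
      rw [hk, Nat.cast_succ] at h
      refine le_trans ?_ h
      gcongr
  have hscale := mul_le_mul_right hlim (ENNReal.ofReal ((k + 2) / 2))
  rw [← mul_assoc, ← mul_assoc, ← ENNReal.ofReal_mul (by positivity),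
    ← ENNReal.ofReal_mul (by positivity)] at hscale
  convert hscale using 3 <;> field_simp
  ring

lemma integral_iSup_eq_toReal_projMass {h : E → ℝ} (h₀ : ∀ x, 0 ≤ h x)
    (hbdd : BddAbove (Set.range h))
    (hqc : QuasiconcaveOn ℝ Set.univ fun x => ENNReal.ofReal (h x)) (H : Submodule ℝ E) :
    ∫ y : H, ⨆ z : Hᗮ, h (y + z) = (projMass (fun x => ENNReal.ofReal (h x)) H).toReal := by
  obtain ⟨M, hM⟩ := hbdd
  have hpt (y : H) :
      ⨆ z : Hᗮ, h (y + z) = (projFun (fun x => ENNReal.ofReal (h x)) H y).toReal := by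
    rw [projFun, supTranslate, ← iSup_subtype'', ENNReal.toReal_iSup fun _ => ENNReal.ofReal_ne_top]
    exact iSup_congr fun z => (ENNReal.toReal_ofReal (h₀ _)).symm
  have hfin (y : H) : projFun (fun x => ENNReal.ofReal (h x)) H y < ∞ :=
    (iSup₂_le fun z _ => ENNReal.ofReal_le_ofReal (hM ⟨y + z, rfl⟩)).trans_lt ENNReal.ofReal_lt_top
  simp_rw [hpt]
  exact integral_toReal (aemeasurable_of_quasiconcaveOn_univ (quasiconcaveOn_univ_projFun hqc H) _)
    (.of_forall hfin)

lemma projMass_bot (F : E → ℝ≥0∞) :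
    projMass F ⊥ = (⨆ x, F x) * ENNReal.ofReal (ballVol 0) := by
  have huniv : closedBall (0 : (⊥ : Submodule ℝ E)) 1 = Set.univ :=
    Set.eq_univ_of_forall fun x => by simp [Subsingleton.elim x 0]
  have hvol : ENNReal.ofReal (ballVol 0) = volume (Set.univ : Set (⊥ : Submodule ℝ E)) := by
    rw [← toReal_volume_closedBall_eq_ballVol (finrank_bot ℝ E),
      ENNReal.ofReal_toReal measure_closedBall_lt_top.ne, huniv]
  rw [hvol, projMass, lintegral_unique]
  simp [projFun, supTranslate, Subsingleton.elim default (0 : (⊥ : Submodule ℝ E))]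

end EuclideanSpaces

/-! ### The orthogonal group -/

lemma isMulRightInvariant_of_isProbabilityMeasure {G : Type*} [Group G] [MeasurableSpace G]
    [MeasurableMul₂ G] [MeasurableInv G] (ν : Measure G) [IsProbabilityMeasure ν]
    [ν.IsMulLeftInvariant] : ν.IsMulRightInvariant := by
  have hinv : ν.inv = ν := Measure.ext_of_lintegral _ fun φ hφ =>
    calc ∫⁻ x, φ x ∂ν.inv = ∫⁻ x, φ x⁻¹ ∂ν := by rw [Measure.inv, lintegral_map hφ measurable_inv]
      _ = ∫⁻ y, ∫⁻ x, φ (y⁻¹ * x)⁻¹ ∂ν ∂ν := by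
          simp_rw [lintegral_mul_left_eq_self fun x => φ x⁻¹]
          simp
      _ = ∫⁻ x, ∫⁻ y, φ (x⁻¹ * y) ∂ν ∂ν := by
          simp_rw [mul_inv_rev, inv_inv]
          exact lintegral_lintegral_swap (by fun_prop)
      _ = ∫⁻ x, φ x ∂ν := by
          simp_rw [lintegral_mul_left_eq_self]
          simp
  rw [← hinv]
  infer_instance

lemma exists_linearIsometryEquiv_map_eq {V : Type*} [NormedAddCommGroup V] [InnerProductSpace ℝ V]
    [FiniteDimensional ℝ V] {S T : Submodule ℝ V} (h : finrank ℝ S = finrank ℝ T) :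
    ∃ e : V ≃ₗᵢ[ℝ] V, S.map e.toLinearIsometry.toLinearMap = T := by
  let e₀ : S ≃ₗᵢ[ℝ] T :=
    (stdOrthonormalBasis ℝ S).equiv (stdOrthonormalBasis ℝ T) (finCongr h)
  let L : S →ₗᵢ[ℝ] V := T.subtypeₗᵢ.comp e₀.toLinearIsometry
  refine ⟨L.extend.toLinearIsometryEquiv rfl, Submodule.eq_of_le_of_finrank_eq ?_ ?_⟩
  · rintro _ ⟨x, hx, rfl⟩
    have : L.extend x = L ⟨x, hx⟩ := L.extend_apply ⟨x, hx⟩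
    change L.extend x ∈ T
    rw [this]
    exact Subtype.prop _
  · rw [← h]
    exact LinearEquiv.finrank_map_eq (L.extend.toLinearIsometryEquiv rfl).toLinearEquiv S

lemma finrank_map_subtype_orthogonal_span_singleton {k : ℕ} {E : Type*} [NormedAddCommGroup E]
    [InnerProductSpace ℝ E] {H : Submodule ℝ E} (hH : finrank ℝ H = k + 1) {v : H} (hv : v ≠ 0) :
    finrank ℝ ((ℝ ∙ v)ᗮ.map H.subtype) = k := by
  have := Fact.mk hH
  rw [Submodule.finrank_map_subtype_eq, Submodule.finrank_orthogonal_span_singleton (n := k) hv]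

lemma upperSemicontinuous_biSup_of_isCompact {Y Z : Type*} [TopologicalSpace Y]
    [TopologicalSpace Z] {F : Y × Z → ℝ≥0∞} (hF : UpperSemicontinuous F) {K : Set Z}
    (hK : IsCompact K) : UpperSemicontinuous fun y => ⨆ z ∈ K, F (y, z) := by
  intro y t ht
  obtain ⟨t', hyt', ht't⟩ := exists_between ht
  have hev : ∀ᶠ y' in 𝓝 y, ∀ z ∈ K, F (y', z) < t' :=
    hK.eventually_forall_of_forall_eventually fun z hz =>
      hF (y, z) t' ((le_iSup₂ (f := fun z _ => F (y, z)) z hz).trans_lt hyt')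
  filter_upwards [hev] with y' hy'
  exact (iSup₂_le fun z hz => (hy' z hz).le).trans_lt ht't

lemma measurable_iSup_of_upperSemicontinuous {Y Z : Type*} [TopologicalSpace Y]
    [MeasurableSpace Y] [OpensMeasurableSpace Y] [TopologicalSpace Z] [SigmaCompactSpace Z]
    {F : Y × Z → ℝ≥0∞} (hF : UpperSemicontinuous F) : Measurable fun y => ⨆ z, F (y, z) := by
  have hcover (y : Y) : ⨆ z, F (y, z) = ⨆ (i : ℕ) (z ∈ compactCovering Z i), F (y, z) := by
    rw [← iSup_iUnion, iUnion_compactCovering, iSup_univ]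
  simp_rw [hcover]
  exact .iSup fun i =>
    (upperSemicontinuous_biSup_of_isCompact hF (isCompact_compactCovering Z i)).measurable

section OrthogonalGroup

variable {n : ℕ}

instance (n : ℕ) : BorelSpace (OG n) := ⟨rfl⟩

instance (n : ℕ) : SecondCountableTopology (OG n) :=
  have : SecondCountableTopology (Matrix (Fin n) (Fin n) ℝ) :=
    inferInstanceAs (SecondCountableTopology (Fin n → Fin n → ℝ))
  TopologicalSpace.Subtype.secondCountableTopology _

/-- The identification of orthogonal matrices with linear isometries of `ℝⁿ`. -/
def OG.isometryEquiv (n : ℕ) : OG n ≃* (Eucl n ≃ₗᵢ[ℝ] Eucl n) :=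
  (Unitary.mapEquiv
    (StarMulEquiv.ofClass (Matrix.toEuclideanCLM (n := Fin n) (𝕜 := ℝ)))).toMulEquiv.trans
      Unitary.linearIsometryEquiv

lemma OG.isometryEquiv_apply (g : OG n) (x : Eucl n) :
    OG.isometryEquiv n g x = Matrix.toEuclideanLin (g : Matrix (Fin n) (Fin n) ℝ) x :=
  rfl

lemma lintegral_projMass_eq_of_finrank_eq (ν : Measure (OG n)) [ν.IsMulRightInvariant]
    (F : Eucl n → ℝ≥0∞) {S T : Submodule ℝ (Eucl n)} (h : finrank ℝ S = finrank ℝ T) :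
    ∫⁻ g, projMass (F ∘ OG.isometryEquiv n g) S ∂ν =
      ∫⁻ g, projMass (F ∘ OG.isometryEquiv n g) T ∂ν := by
  obtain ⟨e, rfl⟩ := exists_linearIsometryEquiv_map_eq h
  let r := (OG.isometryEquiv n).symm e
  have hr (g : OG n) : projMass (F ∘ OG.isometryEquiv n (g * r)) S =
      projMass (F ∘ OG.isometryEquiv n g) (S.map e.toLinearIsometry.toLinearMap) := by
    rw [← projMass_comp_linearIsometryEquiv, map_mul, (OG.isometryEquiv n).apply_symm_apply]
    rfl
  rw [← lintegral_mul_right_eq_self _ r]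
  exact lintegral_congr hr

lemma finrank_stdSubspace {m : ℕ} (hm : m ≤ n) : finrank ℝ (stdSubspace n m) = m := by
  have hset : {v : Eucl n | ∃ i : Fin n, (i : ℕ) < m ∧ v = EuclideanSpace.single i 1} =
      Set.range fun i : Fin m => EuclideanSpace.basisFun (Fin n) ℝ (Fin.castLE hm i) := by
    ext v
    constructor
    · rintro ⟨i, hi, rfl⟩
      exact ⟨⟨i, hi⟩, by simp⟩
    · rintro ⟨i, rfl⟩
      exact ⟨Fin.castLE hm i, i.2, by simp⟩
  rw [stdSubspace, hset, finrank_span_eq_card, Fintype.card_fin]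
  exact (EuclideanSpace.basisFun (Fin n) ℝ).orthonormal.linearIndependent.comp _
    (Fin.castLE_injective hm)

lemma OG.continuous_isometryEquiv_apply {X : Type*} [TopologicalSpace X] {g : X → OG n}
    {x : X → Eucl n} (hg : Continuous g) (hx : Continuous x) :
    Continuous fun a => OG.isometryEquiv n (g a) (x a) := by
  have h : Continuous fun a => (g a : Matrix (Fin n) (Fin n) ℝ).mulVec (x a).ofLp :=
    (continuous_subtype_val.comp hg).matrix_mulVec ((PiLp.continuous_ofLp 2 _).comp hx)
  exact (PiLp.continuous_toLp 2 _).comp h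

lemma measurable_projMass_comp_isometryEquiv {F : Eucl n → ℝ≥0∞} (hF : UpperSemicontinuous F)
    (H : Submodule ℝ (Eucl n)) :
    Measurable fun g : OG n => projMass (F ∘ OG.isometryEquiv n g) H := by
  have husc : UpperSemicontinuous fun p : (OG n × H) × Hᗮ =>
      F (OG.isometryEquiv n p.1.1 ((p.1.2 : Eucl n) + p.2)) :=
    hF.comp (OG.continuous_isometryEquiv_apply (by fun_prop) (by fun_prop))
  have hproj : Measurable fun p : OG n × H => projFun (F ∘ OG.isometryEquiv n p.1) H p.2 := by
    convert measurable_iSup_of_upperSemicontinuous husc using 2 with p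
    rw [projFun, supTranslate, iSup_subtype']
    rfl
  exact hproj.lintegral_prod_right

lemma DilationBound.exists_ne_top_forall_projMass_comp_le {c : ℝ} {F : Eucl n → ℝ≥0∞}
    (hF : DilationBound c F) (hqc : QuasiconcaveOn ℝ Set.univ F) (hint : ∫⁻ x, F x ≠ ∞)
    (H : Submodule ℝ (Eucl n)) :
    ∃ B ≠ ∞, ∀ g : OG n, projMass (F ∘ OG.isometryEquiv n g) H ≤ B := by
  have hpos : volume (closedBall (0 : Hᗮ) 1) ≠ 0 := (measure_closedBall_pos _ _ one_pos).ne'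
  refine ⟨ENNReal.ofReal (Real.exp c) * (ENNReal.ofReal (2 ^ finrank ℝ (Eucl n)) * ∫⁻ x, F x) /
    volume (closedBall (0 : Hᗮ) 1), ENNReal.div_ne_top (by finiteness) hpos, fun g => ?_⟩
  let e := OG.isometryEquiv n g
  rw [ENNReal.le_div_iff_mul_le (.inl hpos) (.inl measure_closedBall_lt_top.ne),
    ← e.measurePreserving.lintegral_comp_emb e.toHomeomorph.measurableEmbedding F]
  exact (hF.comp_linearIsometry e.toLinearIsometry).projMass_mul_volume_closedBall_le
    (quasiconcaveOn_univ_comp_linearMap hqc e.toLinearIsometry.toLinearMap) H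

lemma DilationBound.lintegral_projMass_comp_ne_top {c : ℝ} {F : Eucl n → ℝ≥0∞}
    (hF : DilationBound c F) (hqc : QuasiconcaveOn ℝ Set.univ F) (hint : ∫⁻ x, F x ≠ ∞)
    (ν : Measure (OG n)) [IsFiniteMeasure ν] (H : Submodule ℝ (Eucl n)) :
    ∫⁻ g, projMass (F ∘ OG.isometryEquiv n g) H ∂ν ≠ ∞ := by
  obtain ⟨B, hB, hle⟩ := hF.exists_ne_top_forall_projMass_comp_le hqc hint H
  exact ne_top_of_le_ne_top (by finiteness) ((lintegral_mono hle).trans_eq (lintegral_const B))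

lemma DilationBound.lintegral_projMass_stdSubspace_le {c : ℝ} {F : Eucl n → ℝ≥0∞}
    (hF : DilationBound c F) (hqc : QuasiconcaveOn ℝ Set.univ F) (hint : ∫⁻ x, F x ≠ ∞) {k : ℕ}
    (hk : k + 1 ≤ n) (ν : Measure (OG n)) [IsFiniteMeasure ν] [ν.IsMulRightInvariant] :
    ENNReal.ofReal ((k + 1) * ballVol (k + 1)) *
        ∫⁻ g, projMass (F ∘ OG.isometryEquiv n g) (stdSubspace n k) ∂ν ≤
      ENNReal.ofReal ((c + k + 1) * ballVol k) *
        ∫⁻ g, projMass (F ∘ OG.isometryEquiv n g) (stdSubspace n (k + 1)) ∂ν := by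
  set H := stdSubspace n (k + 1)
  have hH : finrank ℝ H = k + 1 := finrank_stdSubspace hk
  have hqc' (g : OG n) : QuasiconcaveOn ℝ Set.univ (F ∘ OG.isometryEquiv n g) :=
    quasiconcaveOn_univ_comp_linearMap hqc (OG.isometryEquiv n g).toLinearIsometry.toLinearMap
  have hF' (g : OG n) : DilationBound c (F ∘ OG.isometryEquiv n g) :=
    hF.comp_linearIsometry (OG.isometryEquiv n g).toLinearIsometry
  obtain ⟨B, hB, hle⟩ := hF.exists_ne_top_forall_projMass_comp_le hqc hint H
  refine ofReal_mul_le_of_forall_le_lintegral_projMass hH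
    (fun g => quasiconcaveOn_univ_projFun (hqc' g) H) (fun g => (hF' g).projFun H)
    (fun g => ne_top_of_le_ne_top hB (hle g))
    (hF.lintegral_projMass_comp_ne_top hqc hint ν H) fun v hv => le_of_eq ?_
  simp_rw [projMass_projFun]
  exact lintegral_projMass_eq_of_finrank_eq ν F ((finrank_stdSubspace (Nat.le_of_succ_le hk)).trans
    (finrank_map_subtype_orthogonal_span_singleton hH hv).symm)

end OrthogonalGroup

/-! ### Log-concave functions and quermassintegrals -/

lemma exists_pos_measure_setOf_le_ne_zero {α : Type*} [MeasurableSpace α] {μ : Measure α}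
    {g : α → ℝ} (hg : 0 < ∫ x, g x ∂μ) : ∃ t > 0, μ {x | t ≤ g x} ≠ 0 := by
  by_contra! hnull
  have hlt : ∀ᵐ x ∂μ, ∀ j : ℕ, g x < 1 / ((j : ℝ) + 1) := by
    rw [ae_all_iff]
    intro j
    simpa only [ae_iff, not_lt] using hnull (1 / ((j : ℝ) + 1)) (by positivity)
  refine hg.not_ge (integral_nonpos_of_ae ?_)
  filter_upwards [hlt] with x hx
  exact ge_of_tendsto' tendsto_one_div_add_atTop_nhds_zero_nat fun j => (hx j).le

lemma nonempty_interior_of_convex_of_measure_ne_zero {V : Type*} [NormedAddCommGroup V]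
    [NormedSpace ℝ V] [FiniteDimensional ℝ V] [MeasurableSpace V] [BorelSpace V] {μ : Measure V}
    [μ.IsAddHaarMeasure] {s : Set V} (hs : Convex ℝ s) (h : μ s ≠ 0) : (interior s).Nonempty := by
  contrapose! h
  have hsub : s ⊆ frontier s := by
    rw [frontier, h, Set.sdiff_empty]
    exact subset_closure
  exact measure_mono_null hsub (hs.addHaar_frontier μ)

section LogConcave

variable {n : ℕ} {f : Eucl n → ℝ}

lemma IsLogConcave.quasiconcaveOn_univ (hf : IsLogConcave f) (h₀ : ∀ x, 0 ≤ f x) :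
    QuasiconcaveOn ℝ Set.univ f := by
  rw [quasiconcaveOn_iff_min_le]
  refine ⟨convex_univ, fun x _ y _ a b ha hb hab => ?_⟩
  obtain rfl : b = 1 - a := by linarith
  rcases ha.eq_or_lt with rfl | ha
  · simp
  rcases hb.eq_or_lt with hb | hb
  · obtain rfl : a = 1 := by linarith
    simp
  have hmin : 0 ≤ min (f x) (f y) := le_min (h₀ x) (h₀ y)
  calc min (f x) (f y) = min (f x) (f y) ^ a * min (f x) (f y) ^ (1 - a) := by
        rw [← Real.rpow_add' hmin (by simp), add_sub_cancel, Real.rpow_one]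
    _ ≤ f x ^ a * f y ^ (1 - a) := by
        gcongr
        exacts [Real.rpow_nonneg (h₀ x) a, min_le_left _ _, min_le_right _ _]
    _ ≤ f (a • x + (1 - a) • y) := hf x y a ha (by linarith)

lemma IsLogConcave.dilationBound (hf : IsLogConcave f) (h₀ : ∀ x, 0 ≤ f x) {c : ℝ} (hc : 0 ≤ c)
    (hball : ∀ x ∈ closedBall 0 1, ∀ z, Real.exp (-c) * f z ≤ f x) :
    DilationBound c fun x => ENNReal.ofReal (f x) := by
  intro ε hε x z hxz
  rw [← ENNReal.ofReal_mul (Real.exp_pos _).le]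
  refine ENNReal.ofReal_le_ofReal ?_
  rcases (h₀ z).eq_or_lt with hz | hz
  · rw [← hz]
    exact mul_nonneg (Real.exp_pos _).le (h₀ _)
  set t : ℝ := (1 + ε)⁻¹ with ht
  set b : Eucl n := ε⁻¹ • (x - z) with hb
  have ht₀ : 0 < t := by positivity
  have ht₁ : t < 1 := inv_lt_one_of_one_lt₀ (by linarith)
  have htε : 1 - t = t * ε := by
    rw [ht]
    field_simp
    ring
  have hcomb : t • z + (1 - t) • b = t • x := by
    rw [htε, hb, smul_smul, mul_assoc, mul_inv_cancel₀ hε.ne']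
    module
  have hbmem : b ∈ closedBall 0 1 := by
    rw [mem_closedBall_zero_iff, hb, norm_smul, norm_inv, Real.norm_of_nonneg hε.le,
      inv_mul_le_iff₀ hε, mul_one]
    exact hxz
  have hlow : Real.exp (-(c * ε)) * f z ≤ f (t • x) := calc
    Real.exp (-(c * ε)) * f z ≤ Real.exp (-c * (1 - t)) * f z := by
        have : t * ε ≤ ε := mul_le_of_le_one_left hε.le ht₁.le
        gcongr
        nlinarith
    _ = f z ^ t * (Real.exp (-c) * f z) ^ (1 - t) := by
        rw [Real.mul_rpow (Real.exp_pos _).le hz.le, ← Real.exp_mul, mul_left_comm,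
          ← Real.rpow_add hz, add_sub_cancel, Real.rpow_one]
    _ ≤ f z ^ t * f b ^ (1 - t) := by
        gcongr
        exact hball b hbmem z
    _ ≤ f (t • x) := hcomb ▸ hf z b t ht₀ ht₁
  rwa [Real.exp_neg, inv_mul_le_iff₀ (Real.exp_pos _)] at hlow

namespace MemQ0

lemma quasiconcaveOn_univ_ofReal (hf : MemQ0 f) :
    QuasiconcaveOn ℝ Set.univ fun x => ENNReal.ofReal (f x) :=
  (hf.2.1.quasiconcaveOn_univ hf.1).monotone_comp (g := ENNReal.ofReal)
    ENNReal.ofReal_mono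

lemma exists_pos_forall_mem_ball_le (hf : MemQ0 f) :
    ∃ t > 0, ∃ x₀, ∃ r > 0, ∀ x ∈ ball x₀ r, t ≤ f x := by
  obtain ⟨t, ht, hvol⟩ := exists_pos_measure_setOf_le_ne_zero hf.2.2.2.2
  have hconv : Convex ℝ {x | t ≤ f x} := by
    simpa only [Set.mem_univ, true_and] using hf.2.1.quasiconcaveOn_univ hf.1 t
  obtain ⟨x₀, hx₀⟩ := nonempty_interior_of_convex_of_measure_ne_zero hconv hvol
  obtain ⟨r, hr, hball⟩ := Metric.mem_nhds_iff.1 (mem_interior_iff_mem_nhds.1 hx₀)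
  exact ⟨t, ht, x₀, r, hr, hball⟩

-- On the ball of half the radius around the midpoint of `x` and `x₀`, log-concavity gives
-- `f ≥ √(f x) * √t`.
lemma sqrt_mul_measureReal_ball_le_integral (hf : MemQ0 f) {t r : ℝ} {x₀ : Eucl n}
    (hball : ∀ x ∈ ball x₀ r, t ≤ f x) (x : Eucl n) :
    √(f x) * √t * volume.real (ball (0 : Eucl n) (r / 2)) ≤ ∫ y, f y := by
  set m : Eucl n := (1 / 2 : ℝ) • (x + x₀) with hm
  have hlow : ∀ y ∈ ball m (r / 2), √(f x) * √t ≤ f y := by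
    intro y hy
    have hmem : (2 : ℝ) • y - x ∈ ball x₀ r := by
      rw [mem_ball_iff_norm] at hy ⊢
      have : (2 : ℝ) • y - x - x₀ = (2 : ℝ) • (y - m) := by
        rw [hm]
        module
      rw [this, norm_smul, Real.norm_ofNat]
      linarith
    have hmid : (1 / 2 : ℝ) • x + (1 - 1 / 2 : ℝ) • ((2 : ℝ) • y - x) = y := by module
    have hlc := hf.2.1 x ((2 : ℝ) • y - x) (1 / 2) (by norm_num) (by norm_num)
    rw [hmid, sub_self_div_two, ← Real.sqrt_eq_rpow, ← Real.sqrt_eq_rpow] at hlc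
    calc √(f x) * √t ≤ √(f x) * √(f ((2 : ℝ) • y - x)) := by
          gcongr
          exact hball _ hmem
      _ ≤ f y := hlc
  calc √(f x) * √t * volume.real (ball (0 : Eucl n) (r / 2))
      = √(f x) * √t * volume.real (ball m (r / 2)) := by
        rw [Measure.real, Measure.real, Measure.addHaar_ball_center _ m]
    _ = ∫ _ in ball m (r / 2), √(f x) * √t := by rw [setIntegral_const, smul_eq_mul, mul_comm]
    _ ≤ ∫ y in ball m (r / 2), f y :=
        setIntegral_mono_on (integrableOn_const measure_ball_lt_top.ne)
          hf.2.2.2.1.integrableOn measurableSet_ball hlow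
    _ ≤ ∫ y, f y := setIntegral_le_integral hf.2.2.2.1 (.of_forall hf.1)

lemma bddAbove_range (hf : MemQ0 f) : BddAbove (Set.range f) := by
  obtain ⟨t, ht, x₀, r, hr, hball⟩ := hf.exists_pos_forall_mem_ball_le
  have hV : 0 < volume.real (ball (0 : Eucl n) (r / 2)) :=
    ENNReal.toReal_pos (measure_ball_pos _ _ (by positivity)).ne' measure_ball_lt_top.ne
  refine ⟨((∫ y, f y) / (√t * volume.real (ball (0 : Eucl n) (r / 2)))) ^ 2, ?_⟩
  rintro _ ⟨x, rfl⟩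
  have hI : 0 ≤ ∫ y, f y := integral_nonneg hf.1
  rw [← Real.sqrt_le_left (by positivity), le_div_iff₀ (by positivity), ← mul_assoc]
  exact hf.sqrt_mul_measureReal_ball_le_integral hball x

lemma le_supNorm (hf : MemQ0 f) (x : Eucl n) : f x ≤ supNorm f :=
  le_ciSup hf.bddAbove_range x

lemma supNorm_pos (hf : MemQ0 f) : 0 < supNorm f := by
  by_contra! hsup
  exact hf.2.2.2.2.not_ge (integral_nonpos fun x => (hf.le_supNorm x).trans hsup)

lemma nonneg_of_exp_neg_mul_supNorm_le (hf : MemQ0 f) {c : ℝ} {x : Eucl n}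
    (h : Real.exp (-c) * supNorm f ≤ f x) : 0 ≤ c := by
  have hexp : Real.exp (-c) ≤ 1 :=
    (mul_le_iff_le_one_left hf.supNorm_pos).1 (h.trans (hf.le_supNorm x))
  simpa using hexp

lemma dilationBound_ofReal (hf : MemQ0 f) {c : ℝ}
    (hball : ∀ x ∈ closedBall 0 1, Real.exp (-c) * supNorm f ≤ f x) :
    DilationBound c fun x => ENNReal.ofReal (f x) := by
  have hc := hf.nonneg_of_exp_neg_mul_supNorm_le (hball 0 (by simp))
  refine hf.2.1.dilationBound hf.1 hc fun x hx z => le_trans ?_ (hball x hx)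
  gcongr
  exact hf.le_supNorm z

lemma lintegral_ofReal_ne_top (hf : MemQ0 f) : ∫⁻ x, ENNReal.ofReal (f x) ≠ ∞ :=
  hf.2.2.2.1.lintegral_lt_top.ne

lemma integral_iSup_comp_isometryEquiv (hf : MemQ0 f) (g : OG n) (H : Submodule ℝ (Eucl n)) :
    ∫ y : H, ⨆ z : Hᗮ, f (OG.isometryEquiv n g (y + z)) =
      (projMass ((fun x => ENNReal.ofReal (f x)) ∘ OG.isometryEquiv n g) H).toReal :=
  integral_iSup_eq_toReal_projMass (fun _ => hf.1 _)
    (hf.bddAbove_range.mono (Set.range_comp_subset_range _ f))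
    (quasiconcaveOn_univ_comp_linearMap hf.quasiconcaveOn_univ_ofReal
      (OG.isometryEquiv n g).toLinearIsometry.toLinearMap) H

lemma toReal_iSup_ofReal (hf : MemQ0 f) : (⨆ x, ENNReal.ofReal (f x)).toReal = supNorm f := by
  rw [ENNReal.toReal_iSup fun _ => ENNReal.ofReal_ne_top]
  exact iSup_congr fun x => ENNReal.toReal_ofReal (hf.1 x)

lemma querm_eq (hf : MemQ0 f) {c : ℝ} (hF : DilationBound c fun x => ENNReal.ofReal (f x))
    (ν : Measure (OG n)) [IsProbabilityMeasure ν] (j : ℕ) :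
    querm ν f j = ballVol n / ballVol (n - j) *
      (∫⁻ g, projMass ((fun x => ENNReal.ofReal (f x)) ∘ OG.isometryEquiv n g)
        (stdSubspace n (n - j)) ∂ν).toReal := by
  rcases eq_or_ne j n with rfl | hj
  · have hbot : stdSubspace j 0 = ⊥ := Submodule.finrank_eq_zero.1 (finrank_stdSubspace j.zero_le)
    have hsup (g : OG j) : ⨆ x, ENNReal.ofReal (f (OG.isometryEquiv j g x)) =
        ⨆ x, ENNReal.ofReal (f x) :=
      (OG.isometryEquiv j g).surjective.iSup_comp fun x => ENNReal.ofReal (f x)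
    have hω := ballVol_pos 0
    simp only [querm, Nat.sub_self, if_true, hbot, projMass_bot, Function.comp_apply, hsup,
      lintegral_const, measure_univ, mul_one, ENNReal.toReal_mul, hf.toReal_iSup_ofReal,
      ENNReal.toReal_ofReal hω.le]
    field_simp
  · have husc : UpperSemicontinuous fun x => ENNReal.ofReal (f x) :=
      ENNReal.continuous_ofReal.comp_upperSemicontinuous hf.2.2.1 ENNReal.ofReal_mono
    obtain ⟨B, hB, hle⟩ := hF.exists_ne_top_forall_projMass_comp_le hf.quasiconcaveOn_univ_ofReal
      hf.lintegral_ofReal_ne_top (stdSubspace n (n - j))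
    rw [querm, if_neg hj, ← integral_toReal
      (measurable_projMass_comp_isometryEquiv husc _).aemeasurable
      (.of_forall fun g => (hle g).trans_lt hB.lt_top)]
    simp only [← hf.integral_iSup_comp_isometryEquiv, OG.isometryEquiv_apply]

end MemQ0

end LogConcave

end

theorem querm_monotone_of_john_position_general {n k : ℕ} (hk : k + 1 ≤ n) {f : Eucl n → ℝ}
    (hf : MemQ0 f) {c : ℝ}
    (hball : ∀ x ∈ Metric.closedBall (0 : Eucl n) 1, Real.exp (-c) * supNorm f ≤ f x)
    (ν : Measure (OG n)) [IsProbabilityMeasure ν] [ν.IsMulLeftInvariant] :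
    querm ν f (n - k) ≤ querm ν f (n - k - 1) * ((c + k + 1) / (k + 1)) := by
  have := isMulRightInvariant_of_isProbabilityMeasure ν
  have hF := hf.dilationBound_ofReal hball
  have hc := hf.nonneg_of_exp_neg_mul_supNorm_le (hball 0 (by simp))
  have hω := ballVol_pos
  have hqc := hf.quasiconcaveOn_univ_ofReal
  have hint := hf.lintegral_ofReal_ne_top
  have hle := ENNReal.toReal_mono
    (ENNReal.mul_ne_top ENNReal.ofReal_ne_top (hF.lintegral_projMass_comp_ne_top hqc hint ν _))
    (hF.lintegral_projMass_stdSubspace_le hqc hint hk ν)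
  rw [ENNReal.toReal_mul, ENNReal.toReal_mul,
    ENNReal.toReal_ofReal (mul_nonneg (by positivity) (hω _).le),
    ENNReal.toReal_ofReal (mul_nonneg (by positivity) (hω _).le)] at hle
  rw [hf.querm_eq hF, hf.querm_eq hF, Nat.sub_sub_self (Nat.le_of_succ_le hk), Nat.sub_sub,
    Nat.sub_sub_self hk]
  set A := ENNReal.toReal (∫⁻ g, projMass _ (stdSubspace n k) ∂ν)
  set B := ENNReal.toReal (∫⁻ g, projMass _ (stdSubspace n (k + 1)) ∂ν)
  have hωn := hω n
  have hωk := hω k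
  have hωk' := hω (k + 1)
  calc ballVol n / ballVol k * A
      = ballVol n / (ballVol k * ballVol (k + 1) * (k + 1)) *
          ((k + 1) * ballVol (k + 1) * A) := by field_simp
    _ ≤ ballVol n / (ballVol k * ballVol (k + 1) * (k + 1)) *
          ((c + k + 1) * ballVol k * B) := by gcongr
    _ = ballVol n / ballVol (k + 1) * B * ((c + k + 1) / (k + 1)) := by field_simp

/-- **Monotonicity of quermassintegrals in John's position** (Lemma 4.1):
if `f ∈ Q₀ⁿ` dominates `a·‖f‖_∞·1_{B₂ⁿ}` for some `a ∈ [e^{−n}, 1]`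
(e.g. `f` in John's position), then
`W_{n−k}(f) ≤ W_{n−k−1}(f) · (n+k+1)/(k+1)` for `0 ≤ k ≤ n−1`. -/
theorem querm_monotone_of_john_position (n k : ℕ) (hn : 1 ≤ n) (hk : k ≤ n - 1)
    (f : Eucl n → ℝ) (hf : MemQ0 f)
    (hJohn : ∃ a : ℝ, a ∈ Set.Icc (Real.exp (-(n : ℝ))) 1 ∧
      ∀ x : Eucl n,
        a * supNorm f * (Metric.closedBall (0 : Eucl n) 1).indicator
          (fun _ => (1 : ℝ)) x ≤ f x)
    (ν : Measure (OG n)) [IsProbabilityMeasure ν] [ν.IsMulLeftInvariant] :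
    querm ν f (n - k) ≤ querm ν f (n - k - 1) * (((n : ℝ) + k + 1) / (k + 1)) := by
  obtain ⟨a, ⟨ha, -⟩, hfa⟩ := hJohn
  refine querm_monotone_of_john_position_general (by omega) hf (fun x hx => ?_) ν
  calc Real.exp (-(n : ℝ)) * supNorm f ≤ a * supNorm f := by
        gcongr
        exact hf.supNorm_pos.le
    _ ≤ f x := by simpa only [Set.indicator_of_mem hx, mul_one] using hfa x
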